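/- There is an absolute constant C > 0 such that for every integer n ≥ 2 and every ε ∈ (0, 1/2), the following holds: if H ∈ ℝ^{n×n} is a positive semidefinite Hankel matrix of the form H = V_X D_X V_X^T for a finite set X ⊂ ℝ with |x| ≤ 1 for all x ∈ X and positive weights (a_x)_{x∈X}, then there exists a Hankel matrix Ĥ ∈ ℝ^{n×n} of rank at most C·(ln n)·ln(1/ε) with ‖H − Ĥ‖₂ ≤ ε‖H‖₂ and ‖H − Ĥ‖_F ≤ ε‖H‖_F. -/

import Mathlib

open scoped BigOperators

/-- A matrix is Hankel if its entries depend only on the sum of the indices. -/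
def IsHankel {n : ℕ} (A : Matrix (Fin n) (Fin n) ℝ) : Prop :=
  ∀ i j k l : Fin n, (i : ℕ) + (j : ℕ) = (k : ℕ) + (l : ℕ) → A i j = A k l

/-- Euclidean (ℓ₂) norm of a vector. -/
noncomputable def euclNorm {n : ℕ} (x : Fin n → ℝ) : ℝ := Real.sqrt (∑ i, x i ^ 2)

/-- Spectral norm of a matrix: supremum of ‖Ax‖₂ over the Euclidean unit ball. -/
noncomputable def specNorm {n : ℕ} (A : Matrix (Fin n) (Fin n) ℝ) : ℝ :=
  ⨆ x : {x : Fin n → ℝ // euclNorm x ≤ 1}, euclNorm (A.mulVec x.1)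

/-- Frobenius norm of a matrix. -/
noncomputable def froNorm {n : ℕ} (A : Matrix (Fin n) (Fin n) ℝ) : ℝ :=
  Real.sqrt (∑ i, ∑ j, (A i j) ^ 2)

/-- The Vandermonde matrix `V_X ∈ ℝ^{n×|X|}` whose columns are the moment vectors
`v_n(x) = (1, x, …, x^{n−1})ᵀ` for `x ∈ X`. -/
noncomputable def vandermondeX (n : ℕ) (X : Finset ℝ) : Matrix (Fin n) X ℝ :=
  Matrix.of fun (i : Fin n) (x : X) => (x : ℝ) ^ (i : ℕ)

/-- The product `V_X D_X V_Xᵀ` where `D_X = diag((a_x)_{x∈X})`. -/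
noncomputable def vdvT (n : ℕ) (X : Finset ℝ) (a : ℝ → ℝ) : Matrix (Fin n) (Fin n) ℝ :=
  vandermondeX n X * Matrix.diagonal (fun x : X => a (x : ℝ)) * (vandermondeX n X).transpose


open scoped Classical

/-- Log-scale bucketing of a set of nodes `X ⊂ [−1,1]∖{0}`:
`B₀ = {x : ln(1/|x|) ∈ [0, λ/n]}`, `B_r = {x : ln(1/|x|) ∈ (2^{r−1}λ/n, 2^r λ/n]}` for
`1 ≤ r ≤ R`, and `B_{R+1} = {x : ln(1/|x|) > 2^R λ/n}`. -/
noncomputable def bucket (X : Finset ℝ) (lam : ℝ) (n R r : ℕ) : Finset ℝ :=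
  if r = 0 then
    X.filter (fun x => 0 ≤ Real.log (1 / |x|) ∧ Real.log (1 / |x|) ≤ lam / n)
  else if r ≤ R then
    X.filter (fun x =>
      (2 : ℝ) ^ (r - 1) * lam / n < Real.log (1 / |x|) ∧
        Real.log (1 / |x|) ≤ (2 : ℝ) ^ r * lam / n)
  else
    X.filter (fun x => (2 : ℝ) ^ R * lam / n < Real.log (1 / |x|))

/-!
For a node `x` and a center `y`, cutting the binomial expansion of `x ^ k = (y + (x - y)) ^ k`
before order `s` leaves a Hankel matrix whose columns are spanned by `s` vectors depending only on
`y`, with an error of at most `(2 / 3) ^ s * (|y| + 3 / 2 * |x - y|) ^ k`. Since `O(log n)` centers,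
spaced dyadically towards `±1`, suffice to make the last factor `O(|x| ^ m)` whenever
`4 * m ≤ k ≤ 2 * n`, truncating every node around its center gives rank `O(s * log n)`.

As the weights are nonnegative, the `(i, j)` entry of the total error is then `O((2 / 3) ^ s)` times
the entry of `H` itself at `(2 * ⌊i / 8⌋, 2 * ⌊j / 8⌋)`. Repeating each row and column of a matrix
at most `8` times multiplies its spectral and Frobenius norms by at most `8`, so both errors are
controlled by `s = O(log (1 / ε))`.
-/

lemma card_fiber_prodMap_le {ι ι' κ κ' : Type*} [Fintype ι] [Fintype ι']
    [DecidableEq κ] [DecidableEq κ'] {f : ι → κ} {g : ι' → κ'} {K L : ℕ}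
    (hf : ∀ p, (Finset.univ.filter fun i => f i = p).card ≤ K)
    (hg : ∀ p, (Finset.univ.filter fun i => g i = p).card ≤ L) (p : κ × κ') :
    (Finset.univ.filter fun i => Prod.map f g i = p).card ≤ K * L := by
  have fiber_eq_product : (Finset.univ.filter fun i => Prod.map f g i = p) =
      (Finset.univ.filter fun i => f i = p.1) ×ˢ (Finset.univ.filter fun i => g i = p.2) := by
    ext i
    simp [Prod.ext_iff]
  rw [fiber_eq_product, Finset.card_product]
  exact Nat.mul_le_mul (hf _) (hg _)

section EuclideanReindexing

variable {ι κ : Type*} [Fintype ι] [Fintype κ]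

lemma norm_toLp_le_of_abs_le {u v : ι → ℝ} (h : ∀ i, |u i| ≤ v i) :
    ‖WithLp.toLp 2 u‖ ≤ ‖WithLp.toLp 2 v‖ := by
  rw [EuclideanSpace.norm_eq, EuclideanSpace.norm_eq]
  refine Real.sqrt_le_sqrt (Finset.sum_le_sum fun i _ => ?_)
  exact pow_le_pow_left₀ (norm_nonneg _) ((h i).trans (le_abs_self _)) 2

variable [DecidableEq κ]

lemma sum_comp_le_nsmul_sum_of_card_fiber_le {M : Type*} [AddCommMonoid M] [PartialOrder M]
    [IsOrderedAddMonoid M] {f : ι → κ} {K : ℕ}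
    (hf : ∀ p, (Finset.univ.filter fun i => f i = p).card ≤ K) {w : κ → M} (hw : ∀ p, 0 ≤ w p) :
    ∑ i, w (f i) ≤ K • ∑ p, w p := by
  calc ∑ i, w (f i) = ∑ p, (Finset.univ.filter fun i => f i = p).card • w p := by
        rw [← Finset.sum_fiberwise (s := Finset.univ) (g := f)]
        refine Finset.sum_congr rfl fun p _ => Finset.sum_eq_card_nsmul fun i hi => ?_
        rw [(Finset.mem_filter.mp hi).2]
    _ ≤ ∑ p, K • w p :=
        Finset.sum_le_sum fun p _ => nsmul_le_nsmul_left (hw p) (hf p)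
    _ = K • ∑ p, w p := Finset.sum_nsmul _ _ _

lemma norm_toLp_comp_le_of_card_fiber_le {f : ι → κ} {K : ℕ}
    (hf : ∀ p, (Finset.univ.filter fun i => f i = p).card ≤ K) (v : κ → ℝ) :
    ‖WithLp.toLp 2 (v ∘ f)‖ ≤ √K * ‖WithLp.toLp 2 v‖ := by
  rw [EuclideanSpace.norm_eq, EuclideanSpace.norm_eq, ← Real.sqrt_mul (Nat.cast_nonneg K),
    ← nsmul_eq_mul]
  exact Real.sqrt_le_sqrt <|
    sum_comp_le_nsmul_sum_of_card_fiber_le hf (w := fun p => ‖v p‖ ^ 2) fun _ => sq_nonneg _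

end EuclideanReindexing

section OperatorNorm

open scoped Matrix.Norms.L2Operator

variable {ι κ μ : Type*} [Fintype ι] [Fintype κ] [Fintype μ] [DecidableEq κ] [DecidableEq μ]

lemma l2_opNorm_le_of_norm_mulVec_le {A : Matrix ι κ ℝ} {c : ℝ} (hc : 0 ≤ c)
    (h : ∀ x : κ → ℝ, ‖WithLp.toLp 2 (A.mulVec x)‖ ≤ c * ‖WithLp.toLp 2 x‖) : ‖A‖ ≤ c :=
  ContinuousLinearMap.opNorm_le_bound _ hc fun x => h x.ofLp

lemma l2_opNorm_le_of_abs_le {A B : Matrix ι κ ℝ} (h : ∀ i j, |A i j| ≤ B i j) : ‖A‖ ≤ ‖B‖ := by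
  refine l2_opNorm_le_of_norm_mulVec_le (norm_nonneg B) fun x => ?_
  have mulVec_abs_le : ∀ i, |A.mulVec x i| ≤ B.mulVec (fun j => |x j|) i := fun i =>
    (Finset.abs_sum_le_sum_abs _ _).trans <| Finset.sum_le_sum fun j _ => by
      rw [abs_mul]
      exact mul_le_mul_of_nonneg_right (h i j) (abs_nonneg _)
  calc ‖WithLp.toLp 2 (A.mulVec x)‖
      ≤ ‖WithLp.toLp 2 (B.mulVec fun j => |x j|)‖ := norm_toLp_le_of_abs_le mulVec_abs_le
    _ ≤ ‖B‖ * ‖WithLp.toLp 2 fun j => |x j|‖ := B.l2_opNorm_mulVec (WithLp.toLp 2 fun j => |x j|)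
    _ = ‖B‖ * ‖WithLp.toLp 2 x‖ := by simp [EuclideanSpace.norm_eq]

lemma l2_opNorm_submatrix_left_le {f : ι → μ} {K : ℕ}
    (hf : ∀ p, (Finset.univ.filter fun i => f i = p).card ≤ K) (A : Matrix μ κ ℝ) :
    ‖A.submatrix f id‖ ≤ √K * ‖A‖ := by
  refine l2_opNorm_le_of_norm_mulVec_le (by positivity) fun x => ?_
  calc ‖WithLp.toLp 2 ((A.submatrix f id).mulVec x)‖
      ≤ √K * ‖WithLp.toLp 2 (A.mulVec x)‖ := norm_toLp_comp_le_of_card_fiber_le hf (A.mulVec x)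
    _ ≤ √K * (‖A‖ * ‖WithLp.toLp 2 x‖) := by gcongr; exact A.l2_opNorm_mulVec (WithLp.toLp 2 x)
    _ = √K * ‖A‖ * ‖WithLp.toLp 2 x‖ := (mul_assoc _ _ _).symm

lemma l2_opNorm_submatrix_le {ν : Type*} [Fintype ν] [DecidableEq ν]
    {f : ι → μ} {g : κ → ν} {K L : ℕ}
    (hf : ∀ p, (Finset.univ.filter fun i => f i = p).card ≤ K)
    (hg : ∀ p, (Finset.univ.filter fun i => g i = p).card ≤ L) (A : Matrix μ ν ℝ) :
    ‖A.submatrix f g‖ ≤ √K * √L * ‖A‖ := by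
  classical
  calc ‖A.submatrix f g‖ ≤ √K * ‖A.submatrix id g‖ :=
        l2_opNorm_submatrix_left_le hf (A.submatrix id g)
    _ = √K * ‖A.conjTranspose.submatrix g id‖ := by
        rw [← Matrix.l2_opNorm_conjTranspose, Matrix.conjTranspose_submatrix]
    _ ≤ √K * (√L * ‖A.conjTranspose‖) := by gcongr; exact l2_opNorm_submatrix_left_le hg _
    _ = √K * √L * ‖A‖ := by rw [Matrix.l2_opNorm_conjTranspose, mul_assoc]

end OperatorNorm

section SpectralAndFrobenius

open scoped Matrix.Norms.L2Operator

variable {n : ℕ}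

lemma euclNorm_eq_norm_toLp (x : Fin n → ℝ) : euclNorm x = ‖WithLp.toLp 2 x‖ := by
  simp [euclNorm, EuclideanSpace.norm_eq]

lemma specNorm_eq_l2_opNorm (A : Matrix (Fin n) (Fin n) ℝ) : specNorm A = ‖A‖ := by
  rw [← Matrix.l2_opNorm_toEuclideanCLM, ← ContinuousLinearMap.sSup_unitClosedBall_eq_norm,
    specNorm, iSup]
  congr 1
  ext c
  simp only [Set.mem_range, Set.mem_image, Metric.mem_closedBall, dist_zero_right,
    euclNorm_eq_norm_toLp, Subtype.exists]
  exact ⟨fun ⟨x, hx, hc⟩ => ⟨WithLp.toLp 2 x, hx, hc⟩, fun ⟨x, hx, hc⟩ => ⟨x.ofLp, hx, hc⟩⟩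

lemma specNorm_nonneg (A : Matrix (Fin n) (Fin n) ℝ) : 0 ≤ specNorm A :=
  specNorm_eq_l2_opNorm A ▸ norm_nonneg A

lemma froNorm_eq_norm_toLp (A : Matrix (Fin n) (Fin n) ℝ) :
    froNorm A = ‖WithLp.toLp 2 fun p : Fin n × Fin n => A p.1 p.2‖ := by
  simp [froNorm, EuclideanSpace.norm_eq, Fintype.sum_prod_type]

variable {E A : Matrix (Fin n) (Fin n) ℝ} {f : Fin n → Fin n} {K : ℕ} {δ : ℝ}

lemma specNorm_le_of_abs_le_submatrix (hf : ∀ p, (Finset.univ.filter fun i => f i = p).card ≤ K)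
    (hδ : 0 ≤ δ) (hE : ∀ i j, |E i j| ≤ δ * A (f i) (f j)) :
    specNorm E ≤ K * δ * specNorm A := by
  rw [specNorm_eq_l2_opNorm, specNorm_eq_l2_opNorm]
  calc ‖E‖ ≤ ‖(δ • A).submatrix f f‖ := l2_opNorm_le_of_abs_le hE
    _ ≤ √K * √K * ‖δ • A‖ := l2_opNorm_submatrix_le hf hf _
    _ = K * δ * ‖A‖ := by
        rw [Real.mul_self_sqrt (Nat.cast_nonneg K), norm_smul, Real.norm_of_nonneg hδ, mul_assoc]

lemma froNorm_le_of_abs_le_submatrix (hf : ∀ p, (Finset.univ.filter fun i => f i = p).card ≤ K)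
    (hδ : 0 ≤ δ) (hE : ∀ i j, |E i j| ≤ δ * A (f i) (f j)) :
    froNorm E ≤ K * δ * froNorm A := by
  let v : Fin n × Fin n → ℝ := fun p => A p.1 p.2
  rw [froNorm_eq_norm_toLp, froNorm_eq_norm_toLp]
  calc ‖WithLp.toLp 2 fun p : Fin n × Fin n => E p.1 p.2‖
      ≤ ‖WithLp.toLp 2 ((δ • v) ∘ Prod.map f f)‖ := norm_toLp_le_of_abs_le fun p => hE p.1 p.2
    _ ≤ √(K * K : ℕ) * ‖WithLp.toLp 2 (δ • v)‖ :=
        norm_toLp_comp_le_of_card_fiber_le (card_fiber_prodMap_le hf hf) _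
    _ = K * δ * ‖WithLp.toLp 2 v‖ := by
        rw [WithLp.toLp_smul, norm_smul, Real.norm_of_nonneg hδ, Nat.cast_mul,
          Real.sqrt_mul_self (Nat.cast_nonneg K), mul_assoc]

end SpectralAndFrobenius

section BinomialTruncation

/-- The `j`-th Hasse derivative at `y` of the moment sequence `y ↦ (yᵏ)ₖ`; on a window of length `n`
it is a column of a confluent Vandermonde matrix. The truncated exponent `k - j` is harmless, since
the binomial coefficient vanishes for `k < j`. -/
def hasseMoment {R : Type*} [Semiring R] (y : R) (j k : ℕ) : R := k.choose j * y ^ (k - j)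

/-- The expansion of `(y + h)ᵏ` in powers of `h`, cut off before order `s`. For fixed `y`, `h`, `s`
it is a sequence in `k` spanned by the first `s` Hasse moments at `y`. -/
def truncPow {R : Type*} [Semiring R] (y h : R) (s k : ℕ) : R :=
  ∑ j ∈ Finset.range s, hasseMoment y j k * h ^ j

section CommSemiring

variable {R : Type*} [CommSemiring R]

lemma truncPow_eq_add_pow (y h : R) {s k : ℕ} (hk : k < s) : truncPow y h s k = (y + h) ^ k := by
  have terms_vanish : ∀ j ∈ Finset.range s, j ∉ Finset.range (k + 1) →
      hasseMoment y j k * h ^ j = 0 := fun j _ hj => by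
    rw [Finset.mem_range, not_lt] at hj
    rw [hasseMoment, Nat.choose_eq_zero_of_lt hj, Nat.cast_zero, zero_mul, zero_mul]
  rw [truncPow, ← Finset.sum_subset (Finset.range_subset_range.2 hk) terms_vanish, add_comm,
    add_pow]
  refine Finset.sum_congr rfl fun j _ => ?_
  rw [hasseMoment]
  ring

lemma hasseMoment_mul_hasseMoment (y : R) (k l p q : ℕ) :
    hasseMoment y p k * hasseMoment y q l =
      ((k.choose p * l.choose q : ℕ) : R) * y ^ (k + l - (p + q)) := by
  rcases lt_or_ge k p with hp | hp
  · simp [hasseMoment, Nat.choose_eq_zero_of_lt hp]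
  rcases lt_or_ge l q with hq | hq
  · simp [hasseMoment, Nat.choose_eq_zero_of_lt hq]
  rw [hasseMoment, hasseMoment, show k + l - (p + q) = (k - p) + (l - q) by omega, pow_add]
  push_cast
  ring

lemma hasseMoment_add (y : R) (j k l : ℕ) :
    hasseMoment y j (k + l) =
      ∑ pq ∈ Finset.HasAntidiagonal.antidiagonal j,
        hasseMoment y pq.1 k * hasseMoment y pq.2 l := by
  rw [hasseMoment, Nat.add_choose_eq, Nat.cast_sum, Finset.sum_mul]
  refine Finset.sum_congr rfl fun pq hpq => ?_
  rw [hasseMoment_mul_hasseMoment, Finset.HasAntidiagonal.mem_antidiagonal.1 hpq]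

lemma truncPow_shift_mem_span (y h : R) (s l : ℕ) :
    (fun k => truncPow y h s (k + l)) ∈
      Submodule.span R (Set.range fun j : Fin s => hasseMoment y j) := by
  have expansion : (fun k => truncPow y h s (k + l)) =
      ∑ j ∈ Finset.range s, ∑ pq ∈ Finset.HasAntidiagonal.antidiagonal j,
        (hasseMoment y pq.2 l * h ^ j) • hasseMoment y pq.1 := by
    ext k
    simp only [truncPow, hasseMoment_add, Finset.sum_mul, Finset.sum_apply, Pi.smul_apply,
      smul_eq_mul]
    exact Finset.sum_congr rfl fun j _ => Finset.sum_congr rfl fun pq _ => by ring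
  rw [expansion]
  refine Submodule.sum_mem _ fun j hj => Submodule.sum_mem _ fun pq hpq =>
    Submodule.smul_mem _ _ (Submodule.subset_span ⟨⟨pq.1, ?_⟩, rfl⟩)
  have := Finset.HasAntidiagonal.mem_antidiagonal.1 hpq
  have := Finset.mem_range.1 hj
  omega

end CommSemiring

lemma abs_hasseMoment (y : ℝ) (j k : ℕ) : |hasseMoment y j k| = hasseMoment |y| j k := by
  rw [hasseMoment, hasseMoment, abs_mul, abs_pow, Nat.abs_cast]

lemma pow_le_inv_pow_mul_mul_pow {c h : ℝ} (hc : 1 ≤ c) (hh : 0 ≤ h) {s j : ℕ} (hsj : s ≤ j) :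
    h ^ j ≤ c⁻¹ ^ s * (c * h) ^ j := by
  have : 0 < c := one_pos.trans_le hc
  calc h ^ j ≤ c⁻¹ ^ s * c ^ j * h ^ j := by
        refine le_mul_of_one_le_left (by positivity) ?_
        rw [inv_pow, ← div_eq_inv_mul, one_le_div (by positivity)]
        exact pow_le_pow_right₀ hc hsj
    _ = c⁻¹ ^ s * (c * h) ^ j := by rw [mul_pow, mul_assoc]

-- The discarded terms have order `j ≥ s`, so inflating `|h|` by `c` gains at least `c ^ s` on each.
lemma abs_add_pow_sub_truncPow_le {c : ℝ} (hc : 1 ≤ c) (y h : ℝ) (s k : ℕ) :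
    |(y + h) ^ k - truncPow y h s k| ≤ c⁻¹ ^ s * (|y| + c * |h|) ^ k := by
  have : 0 < c := one_pos.trans_le hc
  have hks : k < s + (k + 1) := by omega
  let majorant : ℕ → ℝ := fun j => hasseMoment |y| j k * (c * |h|) ^ j
  have majorant_nonneg (j : ℕ) : 0 ≤ majorant j := by
    simp only [majorant, ← abs_hasseMoment]
    positivity
  have tail_term_le (i : ℕ) :
      |hasseMoment y (s + i) k * h ^ (s + i)| ≤ c⁻¹ ^ s * majorant (s + i) := by
    rw [abs_mul, abs_pow, ← mul_left_comm, ← abs_hasseMoment]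
    gcongr
    exact pow_le_inv_pow_mul_mul_pow hc (abs_nonneg h) (Nat.le_add_right s i)
  calc |(y + h) ^ k - truncPow y h s k|
      = |∑ i ∈ Finset.range (k + 1), hasseMoment y (s + i) k * h ^ (s + i)| := by
        rw [← truncPow_eq_add_pow y h hks, truncPow, Finset.sum_range_add, truncPow,
          add_sub_cancel_left]
    _ ≤ ∑ i ∈ Finset.range (k + 1), c⁻¹ ^ s * majorant (s + i) :=
        (Finset.abs_sum_le_sum_abs _ _).trans (Finset.sum_le_sum fun i _ => tail_term_le i)
    _ = c⁻¹ ^ s * ∑ i ∈ Finset.range (k + 1), majorant (s + i) := (Finset.mul_sum _ _ _).symm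
    _ ≤ c⁻¹ ^ s * ∑ j ∈ Finset.range (s + (k + 1)), majorant j := by
        rw [Finset.sum_range_add majorant s]
        gcongr
        exact le_add_of_nonneg_left (Finset.sum_nonneg fun j _ => majorant_nonneg j)
    _ = c⁻¹ ^ s * (|y| + c * |h|) ^ k := by rw [← truncPow_eq_add_pow _ _ hks, truncPow]

end BinomialTruncation

section Centers

/-- Expansion centers for the nodes in `[0, 1]`: `0` for nodes in `[0, 1/2]`, `1` for nodes within
`1 / n` of `1`, and in between the midpoints of the intervals `1 - [2ʳ, 2ʳ⁺¹] / n`. -/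
noncomputable def nonnegCenters (n : ℕ) : Finset ℝ :=
  insert 0 (insert 1 ((Finset.range (Nat.log 2 n + 1)).image fun r => 1 - 3 / 2 * (2 ^ r / n)))

/-- Expansion centers for the nodes in `[-1, 1]`. -/
noncomputable def centers (n : ℕ) : Finset ℝ := nonnegCenters n ∪ (nonnegCenters n).image Neg.neg

lemma card_centers_le {n : ℕ} (hn : 2 ≤ n) : ((centers n).card : ℝ) ≤ 12 * Real.log n := by
  have nonneg_card : (nonnegCenters n).card ≤ Nat.log 2 n + 3 :=
    (Finset.card_insert_le _ _).trans <| Nat.succ_le_succ <| (Finset.card_insert_le _ _).trans <|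
      Nat.succ_le_succ <| Finset.card_image_le.trans_eq (Finset.card_range _)
  have card_le : (centers n).card ≤ 2 * (Nat.log 2 n + 3) := by
    have := Finset.card_union_le (nonnegCenters n) ((nonnegCenters n).image Neg.neg)
    have := Finset.card_image_le (s := nonnegCenters n) (f := Neg.neg)
    rw [centers]
    omega
  have one_le_log : 1 ≤ Nat.log 2 n := Nat.log_pos one_lt_two hn
  calc ((centers n).card : ℝ) ≤ 8 * (Nat.log 2 n : ℝ) := by
        exact_mod_cast card_le.trans (by omega : _ ≤ 8 * Nat.log 2 n)
    _ ≤ 8 * Real.logb 2 n := by gcongr; exact Real.natLog_le_logb n 2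
    _ = 8 / Real.log 2 * Real.log n := by rw [Real.logb]; ring
    _ ≤ 12 * Real.log n := by
        gcongr
        rw [div_le_iff₀ (Real.log_pos one_lt_two)]
        linarith [Real.log_two_gt_d9]

lemma pow_le_pow_of_pow_four_le {w x : ℝ} (hw : 0 ≤ w) (hx : x ≤ 1) (h : w ^ 4 ≤ x)
    {k m : ℕ} (hm : 4 * m ≤ k) : w ^ k ≤ x ^ m := by
  have hw1 : w ≤ 1 := (pow_le_one_iff_of_nonneg hw four_ne_zero).1 (h.trans hx)
  calc w ^ k ≤ w ^ (4 * m) := pow_le_pow_of_le_one hw hw1 hm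
    _ = (w ^ 4) ^ m := pow_mul w 4 m
    _ ≤ x ^ m := by gcongr

lemma three_halves_mul_pow_four_le_self {x : ℝ} (hx0 : 0 ≤ x) (hx : x ≤ 1 / 2) :
    (3 / 2 * x) ^ 4 ≤ x := by
  have cube_le : x ^ 3 ≤ (1 / 2) ^ 3 := by gcongr
  calc (3 / 2 * x) ^ 4 = 81 / 16 * x ^ 3 * x := by ring
    _ ≤ 1 * x := by gcongr; linarith
    _ = x := one_mul x

lemma one_sub_mul_pow_four_le_one_sub {u : ℝ} (hu0 : 0 ≤ u) (hu : u ≤ 1 / 2) :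
    (1 - 3 / 8 * u) ^ 4 ≤ 1 - u := by
  have sq_le : (1 - 3 / 8 * u) ^ 2 ≤ 1 - 87 / 128 * u := by nlinarith
  calc (1 - 3 / 8 * u) ^ 4 = ((1 - 3 / 8 * u) ^ 2) ^ 2 := by ring
    _ ≤ (1 - 87 / 128 * u) ^ 2 := by gcongr
    _ ≤ 1 - u := by nlinarith

lemma dyadic_center_spread_le {u T : ℝ} (hTu : T ≤ u) (huT : u ≤ 2 * T) :
    1 - 3 / 2 * T + 3 / 2 * |1 - u - (1 - 3 / 2 * T)| ≤ 1 - 3 / 8 * u := by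
  rcases abs_cases (1 - u - (1 - 3 / 2 * T)) with ⟨h, _⟩ | ⟨h, _⟩ <;> rw [h] <;> linarith

lemma exp_three_le : Real.exp 3 ≤ 27 := by
  calc Real.exp 3 = Real.exp 1 ^ 3 := by rw [← Real.exp_nat_mul]; norm_num
    _ ≤ 3 ^ 3 := by gcongr; linarith [Real.exp_one_lt_d9]
    _ = 27 := by norm_num

lemma pow_le_mul_pow_near_one {n k m : ℕ} {u : ℝ} (hu0 : 0 ≤ u) (hu1 : u ≤ 1) (hu : u * n ≤ 1)
    (hk : k ≤ 2 * n) (hm : 4 * m ≤ k) : (1 + 3 / 2 * u) ^ k ≤ 54 * (1 - u) ^ m := by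
  have hkn : (k : ℝ) ≤ 2 * n := by exact_mod_cast hk
  have hmn : (m : ℝ) ≤ n / 2 := by
    rw [le_div_iff₀ two_pos]; exact_mod_cast (by omega : m * 2 ≤ n)
  have upper : (1 + 3 / 2 * u) ^ k ≤ 27 := by
    calc (1 + 3 / 2 * u) ^ k ≤ Real.exp (3 / 2 * u) ^ k := by
          gcongr; linarith [Real.add_one_le_exp (3 / 2 * u)]
      _ = Real.exp (k * (3 / 2 * u)) := (Real.exp_nat_mul _ _).symm
      _ ≤ Real.exp 3 := Real.exp_le_exp.2 (by nlinarith)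
      _ ≤ 27 := exp_three_le
  have lower : 1 / 2 ≤ (1 - u) ^ m := by
    calc 1 / 2 ≤ 1 + m * -u := by nlinarith
      _ ≤ (1 + -u) ^ m := one_add_mul_le_pow (by linarith) m
      _ = (1 - u) ^ m := by rw [← sub_eq_add_neg]
  linarith

lemma exists_dyadic_near {n : ℕ} {u : ℝ} (hu : u ≤ 1) (hun : 1 ≤ u * n) :
    ∃ r ≤ Nat.log 2 n, 2 ^ r / n ≤ u ∧ u ≤ 2 * (2 ^ r / n : ℝ) := by
  have hn0 : (0 : ℝ) < n := by
    by_contra h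
    rw [le_antisymm (not_lt.1 h) n.cast_nonneg, mul_zero] at hun
    linarith
  obtain ⟨r, hr, hr'⟩ := exists_nat_pow_near hun (one_lt_two : (1 : ℝ) < 2)
  refine ⟨r, Nat.le_log_of_pow_le one_lt_two ?_, (div_le_iff₀ hn0).2 hr, ?_⟩
  · exact_mod_cast hr.trans (mul_le_of_le_one_left hn0.le hu)
  · rw [mul_div_assoc', le_div_iff₀ hn0, ← pow_succ']
    exact hr'.le

lemma exists_nonneg_center {n : ℕ} {x : ℝ} (hx0 : 0 ≤ x) (hx1 : x ≤ 1) :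
    ∃ y ∈ nonnegCenters n, ∀ k m : ℕ, k ≤ 2 * n → 4 * m ≤ k →
      (|y| + 3 / 2 * |x - y|) ^ k ≤ 54 * x ^ m := by
  have of_pow_four_le : ∀ y : ℝ, (|y| + 3 / 2 * |x - y|) ^ 4 ≤ x → ∀ k m : ℕ, k ≤ 2 * n →
      4 * m ≤ k → (|y| + 3 / 2 * |x - y|) ^ k ≤ 54 * x ^ m := fun y hy k m _ hm =>
    (pow_le_pow_of_pow_four_le (by positivity) hx1 hy hm).trans
      (le_mul_of_one_le_left (by positivity) (by norm_num))
  obtain ⟨u, rfl⟩ : ∃ u, x = 1 - u := ⟨1 - x, by ring⟩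
  rcases le_total (1 - u) (1 / 2) with hsmall | hlarge
  · refine ⟨0, by simp [nonnegCenters], of_pow_four_le 0 ?_⟩
    rw [abs_zero, zero_add, sub_zero, abs_of_nonneg hx0]
    exact three_halves_mul_pow_four_le_self hx0 hsmall
  rcases le_total (u * n) 1 with hnear | hfar
  · refine ⟨1, by simp [nonnegCenters], fun k m hk hm => ?_⟩
    rw [abs_one, sub_sub_cancel_left, abs_neg, abs_of_nonneg (by linarith : 0 ≤ u)]
    exact pow_le_mul_pow_near_one (by linarith) (by linarith) hnear hk hm
  · obtain ⟨r, hr, hru, hur⟩ := exists_dyadic_near (by linarith) hfar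
    refine ⟨1 - 3 / 2 * (2 ^ r / n), ?_, of_pow_four_le _ ?_⟩
    · exact Finset.mem_insert_of_mem <| Finset.mem_insert_of_mem <|
        Finset.mem_image_of_mem _ <| Finset.mem_range.2 <| Nat.lt_succ_of_le hr
    · refine le_trans ?_ (one_sub_mul_pow_four_le_one_sub (u := u) (by linarith) (by linarith))
      refine pow_le_pow_left₀ (by positivity) ?_ 4
      rw [abs_of_nonneg (by linarith : 0 ≤ 1 - 3 / 2 * (2 ^ r / n : ℝ))]
      exact dyadic_center_spread_le hru hur

lemma exists_center {n : ℕ} {x : ℝ} (hx : |x| ≤ 1) :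
    ∃ y ∈ centers n, ∀ k m : ℕ, k ≤ 2 * n → 4 * m ≤ k →
      (|y| + 3 / 2 * |x - y|) ^ k ≤ 54 * |x| ^ m := by
  obtain ⟨y, hy, hyx⟩ := exists_nonneg_center (n := n) (abs_nonneg x) hx
  rcases abs_choice x with h | h <;> rw [h] at hyx ⊢
  · exact ⟨y, Finset.mem_union_left _ hy, hyx⟩
  · refine ⟨-y, Finset.mem_union_right _ (Finset.mem_image_of_mem _ hy), ?_⟩
    rwa [abs_neg, ← abs_neg (x - -y), neg_sub, sub_eq_add_neg, add_comm (-y), ← sub_eq_add_neg]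

end Centers

section Hankel

/-- The `n × n` Hankel matrix with entries `g (i + j)`. -/
def hankel {R : Type*} (n : ℕ) (g : ℕ → R) : Matrix (Fin n) (Fin n) R :=
  Matrix.of fun i j => g (i + j)

lemma isHankel_hankel (n : ℕ) (g : ℕ → ℝ) : IsHankel (hankel n g) :=
  fun _ _ _ _ h => congrArg g h

lemma vdvT_eq_hankel (n : ℕ) (X : Finset ℝ) (a : ℝ → ℝ) :
    vdvT n X a = hankel n fun k => ∑ x ∈ X, a x * x ^ k := by
  ext i j
  rw [vdvT, Matrix.mul_apply, hankel, Matrix.of_apply, ← Finset.sum_coe_sort X]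
  refine Finset.sum_congr rfl fun x _ => ?_
  rw [Matrix.mul_diagonal, Matrix.transpose_apply, vandermondeX, Matrix.of_apply, Matrix.of_apply,
    pow_add]
  ring

lemma rank_hankel_le_card {R ι : Type*} [Field R] [Fintype ι] (n : ℕ) {b : ι → ℕ → R} {g : ℕ → R}
    (hg : ∀ l, (fun k => g (k + l)) ∈ Submodule.span R (Set.range b)) :
    (hankel n g).rank ≤ Fintype.card ι := by
  let restrict : (ℕ → R) →ₗ[R] (Fin n → R) := LinearMap.funLeft R R Fin.val
  have cols_mem : Submodule.span R (Set.range (hankel n g).col) ≤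
      Submodule.span R (Set.range (restrict ∘ b)) := by
    rw [Submodule.span_le, Set.range_comp, ← Submodule.map_span]
    rintro _ ⟨l, rfl⟩
    exact ⟨_, hg l, rfl⟩
  rw [Matrix.rank_eq_finrank_span_cols]
  exact (Submodule.finrank_mono cols_mem).trans (finrank_range_le_card _)

/-- The index map `i ↦ 2 ⌊i / 8⌋`. It is at most `i / 4`, has fibers of size at most `8`, and its
values are even, so that the moments `x ^ (i' + j')` at contracted indices are nonnegative. -/
def contractIndex {n : ℕ} (i : Fin n) : Fin n := ⟨2 * (i / 8), by omega⟩

lemma card_fiber_contractIndex_le {n : ℕ} (p : Fin n) :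
    (Finset.univ.filter fun i => contractIndex i = p).card ≤ 8 := by
  refine (Finset.card_le_card_of_injOn (t := Finset.range 8) (fun i : Fin n => (i : ℕ) % 8)
    (fun i _ => Finset.mem_coe.2 (Finset.mem_range.2 (Nat.mod_lt _ (by norm_num))))
    fun i hi j hj hij => ?_).trans_eq (Finset.card_range 8)
  have hi' := congrArg Fin.val (Finset.mem_filter.1 hi).2
  have hj' := congrArg Fin.val (Finset.mem_filter.1 hj).2
  simp only [contractIndex] at hi' hj' hij
  omega

lemma abs_pow_contractIndex_add {n : ℕ} (x : ℝ) (i j : Fin n) :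
    |x| ^ (contractIndex i + contractIndex j : ℕ) = x ^ (contractIndex i + contractIndex j : ℕ) :=
  Even.pow_abs ((even_two_mul _).add (even_two_mul _)) x

lemma rank_hankel_sum_truncPow_le {R ι : Type*} [Field R] (n s : ℕ) {X : Finset ι} {Y : Finset R}
    {y : ι → R} (hy : ∀ x ∈ X, y x ∈ Y) (a h : ι → R) :
    (hankel n fun k => ∑ x ∈ X, a x * truncPow (y x) (h x) s k).rank ≤ Y.card * s := by
  let b : Y × Fin s → ℕ → R := fun p => hasseMoment (p.1 : R) p.2
  refine (rank_hankel_le_card n (b := b) fun l => ?_).trans_eq (by simp)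
  have sum_eq : (fun k => ∑ x ∈ X, a x * truncPow (y x) (h x) s (k + l)) =
      ∑ x ∈ X, a x • fun k => truncPow (y x) (h x) s (k + l) := by
    ext
    simp
  rw [sum_eq]
  refine Submodule.sum_mem _ fun x hx => Submodule.smul_mem _ _ <|
    Submodule.span_mono ?_ (truncPow_shift_mem_span (y x) (h x) s l)
  rintro _ ⟨j, rfl⟩
  exact ⟨(⟨y x, hy x hx⟩, j), rfl⟩

lemma exists_center_abs_pow_sub_truncPow_le (n s : ℕ) {x : ℝ} (hx : |x| ≤ 1) :
    ∃ y ∈ centers n, ∀ i j : Fin n, |x ^ (i + j : ℕ) - truncPow y (x - y) s (i + j)| ≤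
      54 * (2 / 3) ^ s * x ^ (contractIndex i + contractIndex j : ℕ) := by
  obtain ⟨y, hy, hyx⟩ := exists_center (n := n) hx
  refine ⟨y, hy, fun i j => ?_⟩
  have hk : (i + j : ℕ) ≤ 2 * n := by omega
  have hm : 4 * (contractIndex i + contractIndex j : ℕ) ≤ i + j := by
    simp only [contractIndex]
    omega
  calc |x ^ (i + j : ℕ) - truncPow y (x - y) s (i + j)|
      = |(y + (x - y)) ^ (i + j : ℕ) - truncPow y (x - y) s (i + j)| := by rw [add_sub_cancel]
    _ ≤ (3 / 2)⁻¹ ^ s * (|y| + 3 / 2 * |x - y|) ^ (i + j : ℕ) :=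
        abs_add_pow_sub_truncPow_le (by norm_num) _ _ _ _
    _ ≤ (2 / 3) ^ s * (54 * |x| ^ (contractIndex i + contractIndex j : ℕ)) := by
        rw [inv_div]
        gcongr
        exact hyx _ _ hk hm
    _ = 54 * (2 / 3) ^ s * x ^ (contractIndex i + contractIndex j : ℕ) := by
        rw [abs_pow_contractIndex_add]
        ring

lemma exists_hankel_entrywise_approx (n s : ℕ) {X : Finset ℝ} {a : ℝ → ℝ}
    (hX : ∀ x ∈ X, |x| ≤ 1) (ha : ∀ x ∈ X, 0 ≤ a x) :
    ∃ A : Matrix (Fin n) (Fin n) ℝ, IsHankel A ∧ A.rank ≤ (centers n).card * s ∧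
      ∀ i j, |(vdvT n X a - A) i j| ≤
        54 * (2 / 3) ^ s * vdvT n X a (contractIndex i) (contractIndex j) := by
  choose! y hy node_error_le using fun x (hx : x ∈ X) =>
    exists_center_abs_pow_sub_truncPow_le n s (hX x hx)
  refine ⟨hankel n fun k => ∑ x ∈ X, a x * truncPow (y x) (x - y x) s k, isHankel_hankel n _,
    rank_hankel_sum_truncPow_le n s hy a fun x => x - y x, fun i j => ?_⟩
  simp only [vdvT_eq_hankel, hankel, Matrix.sub_apply, Matrix.of_apply]
  rw [← Finset.sum_sub_distrib, Finset.mul_sum]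
  refine (Finset.abs_sum_le_sum_abs _ _).trans (Finset.sum_le_sum fun x hx => ?_)
  rw [← mul_sub, abs_mul, abs_of_nonneg (ha x hx), mul_left_comm]
  exact mul_le_mul_of_nonneg_left (node_error_le x hx i j) (ha x hx)

end Hankel

lemma exists_mul_pow_le_and_le_mul_log {M q : ℝ} (hM : 1 ≤ M) (hq0 : 0 < q) (hq1 : q < 1) :
    ∃ C : ℝ, 0 < C ∧ ∀ ε : ℝ, 0 < ε → ε < 1 / 2 →
      ∃ s : ℕ, M * q ^ s ≤ ε ∧ (s : ℝ) ≤ C * Real.log (1 / ε) := by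
  have hlog2 : 0 < Real.log 2 := Real.log_pos one_lt_two
  have hlogM : 0 ≤ Real.log M := Real.log_nonneg hM
  have hlogq : 0 < -Real.log q := neg_pos.2 (Real.log_neg hq0 hq1)
  refine ⟨(Real.log M / Real.log 2 + 1) / -Real.log q + 1 / Real.log 2, by positivity,
    fun ε hε hε2 => ?_⟩
  have log_two_le : Real.log 2 ≤ Real.log (1 / ε) :=
    Real.log_le_log two_pos (by rw [le_div_iff₀ hε]; linarith)
  have one_le_ratio : 1 ≤ Real.log (1 / ε) / Real.log 2 := (one_le_div hlog2).2 log_two_le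
  let t : ℝ := (Real.log M + Real.log (1 / ε)) / -Real.log q
  have t_nonneg : 0 ≤ t := div_nonneg (by linarith) hlogq.le
  refine ⟨⌈t⌉₊, ?_, ?_⟩
  · have hceil : Real.log M + Real.log (1 / ε) ≤ ⌈t⌉₊ * -Real.log q :=
      (div_le_iff₀ hlogq).1 (Nat.le_ceil t)
    rw [← Real.log_le_log_iff (by positivity) hε, Real.log_mul (by positivity) (by positivity),
      Real.log_pow]
    rw [one_div, Real.log_inv] at hceil
    linarith
  · calc (⌈t⌉₊ : ℝ) ≤ t + 1 := (Nat.ceil_lt_add_one t_nonneg).le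
      _ ≤ (Real.log M * (Real.log (1 / ε) / Real.log 2) + Real.log (1 / ε)) / -Real.log q +
            Real.log (1 / ε) / Real.log 2 := by
          gcongr ?_ / _ + ?_
          gcongr
          exact le_mul_of_one_le_right hlogM one_le_ratio
      _ = ((Real.log M / Real.log 2 + 1) / -Real.log q + 1 / Real.log 2) * Real.log (1 / ε) := by
          ring

/-- The existence result for PSD Hankel matrices `H = V_X D_X V_Xᵀ` whose
nodes all satisfy `|x| ≤ 1`. -/
theorem nodes_le_one_low_rank :
    ∃ C : ℝ, 0 < C ∧
      ∀ (n : ℕ), 2 ≤ n → ∀ ε : ℝ, 0 < ε → ε < 1 / 2 →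
        ∀ (X : Finset ℝ) (a : ℝ → ℝ),
          (∀ x ∈ X, |x| ≤ 1) → (∀ x ∈ X, 0 < a x) →
          ∀ H : Matrix (Fin n) (Fin n) ℝ, H = vdvT n X a → H.PosSemidef → IsHankel H →
            ∃ Hhat : Matrix (Fin n) (Fin n) ℝ, IsHankel Hhat ∧
              (Hhat.rank : ℝ) ≤ C * Real.log n * Real.log (1 / ε) ∧
              specNorm (H - Hhat) ≤ ε * specNorm H ∧
              froNorm (H - Hhat) ≤ ε * froNorm H := by
  obtain ⟨K, hK, order⟩ :=
    exists_mul_pow_le_and_le_mul_log (M := 8 * 54) (q := 2 / 3) (by norm_num) (by norm_num)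
      (by norm_num)
  refine ⟨12 * K, by positivity, ?_⟩
  rintro n hn ε hε hε2 X a hX ha H rfl - -
  obtain ⟨s, error_le, s_le⟩ := order ε hε hε2
  obtain ⟨A, A_hankel, rank_le, entry_le⟩ :=
    exists_hankel_entrywise_approx n s hX fun x hx => (ha x hx).le
  have constant_le : ((8 : ℕ) : ℝ) * (54 * (2 / 3) ^ s) ≤ ε := by
    rw [← mul_assoc]
    exact_mod_cast error_le
  refine ⟨A, A_hankel, ?_, ?_, ?_⟩
  · calc (A.rank : ℝ) ≤ (centers n).card * s := by exact_mod_cast rank_le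
      _ ≤ (12 * Real.log n) * (K * Real.log (1 / ε)) := by
          gcongr
          exact card_centers_le hn
      _ = 12 * K * Real.log n * Real.log (1 / ε) := by ring
  · exact (specNorm_le_of_abs_le_submatrix card_fiber_contractIndex_le (by positivity)
      entry_le).trans (mul_le_mul_of_nonneg_right constant_le (specNorm_nonneg _))
  · exact (froNorm_le_of_abs_le_submatrix card_fiber_contractIndex_le (by positivity)
      entry_le).trans (mul_le_mul_of_nonneg_right constant_le (Real.sqrt_nonneg _))
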